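/- Let G be a game with probabilistic uncertainty with priority function p_G : L → {0,…,d}, and let H be the partial-observation game constructed from G with priority function p_H((ℓ,ℓ')) = p_H((ℓ,ℓ',σ_I)) = p_G(ℓ), where Player 2 observes the first component. Player 1 has a sure winning strategy from ℓ_0 in G for Parity(p_G) against all (not all-powerful) Player-2 strategies if and only if Player 1 has an observation-based strategy in H that is sure winning for Parity(p_H) from every state (ℓ_0, ℓ) with un(ℓ_0)(ℓ) > 0 against all observation-based Player-2 strategies. -/

import Mathlib

open Finset MeasureTheory
open scoped Classical

/- ### Games with probabilistic uncertainty -/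

/-- A game with probabilistic uncertainty `(L, Σ_I, Σ_O, Δ, un)`. -/
structure PUGame (L Ai Ao : Type) [Fintype L] [Fintype Ai] [Fintype Ao] : Type where
  Δ : L → Ai → Ao → L → ℝ
  Δ_nonneg : ∀ ℓ σi σo ℓ', 0 ≤ Δ ℓ σi σo ℓ'
  Δ_sum_one : ∀ ℓ σi σo, ∑ ℓ', Δ ℓ σi σo ℓ' = 1
  un : L → L → ℝ
  un_nonneg : ∀ ℓ ℓ', 0 ≤ un ℓ ℓ'
  un_sum_one : ∀ ℓ, ∑ ℓ', un ℓ ℓ' = 1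

/-- A finite prefix `ℓ₀ σ₀ᶦ σ₀ᵒ ℓ₁ … ℓₙ`: the initial location together with
the list of steps `(σᶦ, σᵒ, ℓ)` in *reverse* chronological order. -/
abbrev Pref (L Ai Ao : Type) : Type := L × List (Ai × Ao × L)

variable {L Ai Ao S A : Type}

/-- Last location of a prefix. -/
def lastLoc : Pref L Ai Ao → L
  | (ℓ0, []) => ℓ0
  | (_, t :: _) => t.2.2

/-- The sequence of input/output letters of a prefix (reverse chronological order). -/
def acts (ρ : Pref L Ai Ao) : List (Ai × Ao) := ρ.2.map fun t => (t.1, t.2.1)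

/-- The locations occurring in a prefix. -/
def locList (ρ : Pref L Ai Ao) : List L := ρ.1 :: ρ.2.map fun t => t.2.2

/-- Extension `ρ σᶦ σᵒ ℓ` of a prefix. -/
def extendPref (ρ : Pref L Ai Ao) (σi : Ai) (σo : Ao) (ℓ : L) : Pref L Ai Ao :=
  (ρ.1, (σi, σo, ℓ) :: ρ.2)

section Core
variable [Fintype L] [Fintype Ai] [Fintype Ao]

def IsPrefAux (G : PUGame L Ai Ao) (ℓ0 : L) : List (Ai × Ao × L) → Prop
  | [] => True
  | t :: rest => IsPrefAux G ℓ0 rest ∧ 0 < G.Δ (lastLoc (ℓ0, rest)) t.1 t.2.1 t.2.2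

/-- `ρ` is a genuine prefix of a play of `G`: every transition along `ρ` has
positive probability. -/
def IsPref (G : PUGame L Ai Ao) (ρ : Pref L Ai Ao) : Prop := IsPrefAux G ρ.1 ρ.2

/-- The set of action-matching sequences of `ρ`: same length, same input and
output letters, arbitrary locations. -/
noncomputable def ActMt (ρ : Pref L Ai Ao) : Finset (Pref L Ai Ao) :=
  (Finset.univ : Finset (L × (Fin ρ.2.length → L))).image fun p =>
    (p.1, List.ofFn fun i => ((ρ.2.get i).1, (ρ.2.get i).2.1, p.2 i))

/-- `ObsSeq G ρ ρ'`: the probability of observing `ρ'` given that the actual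
prefix is `ρ`.  (Closed form of the inductive definition: the product of the
`un`-probabilities of the observed locations if the actions match, `0`
otherwise.) -/
noncomputable def ObsSeq (G : PUGame L Ai Ao) (ρ ρ' : Pref L Ai Ao) : ℝ :=
  if acts ρ' = acts ρ then (List.zipWith G.un (locList ρ) (locList ρ')).prod else 0

noncomputable def conePrAux (G : PUGame L Ai Ao) (α : Pref L Ai Ao → Ai → ℝ)
    (β : Pref L Ai Ao → Ai → Ao → ℝ) (ℓ0 : L) : List (Ai × Ao × L) → ℝ
  | [] => 1
  | t :: rest =>
      conePrAux G α β ℓ0 rest *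
        ∑ ρ' ∈ ActMt ((ℓ0, rest) : Pref L Ai Ao),
          ObsSeq G (ℓ0, rest) ρ' * α ρ' t.1 * β (ℓ0, rest) t.1 t.2.1 *
            G.Δ (lastLoc (ℓ0, rest)) t.1 t.2.1 t.2.2

/-- Cone probability `Pr^{α,β}_{ρ.1}(Cone(ρ))` in `G`, where Player 2 observes
the actual history. -/
noncomputable def conePr (G : PUGame L Ai Ao) (α : Pref L Ai Ao → Ai → ℝ)
    (β : Pref L Ai Ao → Ai → Ao → ℝ) (ρ : Pref L Ai Ao) : ℝ :=
  conePrAux G α β ρ.1 ρ.2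

noncomputable def conePrAAux (G : PUGame L Ai Ao) (α : Pref L Ai Ao → Ai → ℝ)
    (β : Pref L Ai Ao → Pref L Ai Ao → Ai → Ao → ℝ) (ℓ0 : L) : List (Ai × Ao × L) → ℝ
  | [] => 1
  | t :: rest =>
      conePrAAux G α β ℓ0 rest *
        ∑ ρ' ∈ ActMt ((ℓ0, rest) : Pref L Ai Ao),
          ObsSeq G (ℓ0, rest) ρ' * α ρ' t.1 * β (ℓ0, rest) ρ' t.1 t.2.1 *
            G.Δ (lastLoc (ℓ0, rest)) t.1 t.2.1 t.2.2

/-- Cone probability `Pr^{α,β^A}_{ρ.1}(Cone(ρ))` in `G` for an all-powerful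
Player 2 (observing both the actual and the observed history). -/
noncomputable def conePrA (G : PUGame L Ai Ao) (α : Pref L Ai Ao → Ai → ℝ)
    (β : Pref L Ai Ao → Pref L Ai Ao → Ai → Ao → ℝ) (ρ : Pref L Ai Ao) : ℝ :=
  conePrAAux G α β ρ.1 ρ.2

end Core

/-- A randomized Player-1 strategy in `G`. -/
structure Strat1 (L Ai Ao : Type) [Fintype Ai] : Type where
  toFun : Pref L Ai Ao → Ai → ℝ
  nonneg : ∀ ρ σi, 0 ≤ toFun ρ σi
  sum_one : ∀ ρ, ∑ σi, toFun ρ σi = 1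

/-- A randomized Player-2 strategy in `G` (observing the actual history). -/
structure Strat2 (L Ai Ao : Type) [Fintype Ao] : Type where
  toFun : Pref L Ai Ao → Ai → Ao → ℝ
  nonneg : ∀ ρ σi σo, 0 ≤ toFun ρ σi σo
  sum_one : ∀ ρ σi, ∑ σo, toFun ρ σi σo = 1

/-- An all-powerful randomized Player-2 strategy in `G` (observing both the
actual and the observed history). -/
structure StratA (L Ai Ao : Type) [Fintype Ao] : Type where
  toFun : Pref L Ai Ao → Pref L Ai Ao → Ai → Ao → ℝ
  nonneg : ∀ ρ ρ' σi σo, 0 ≤ toFun ρ ρ' σi σo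
  sum_one : ∀ ρ ρ' σi, ∑ σo, toFun ρ ρ' σi σo = 1

/- ### The partial-observation game `H` constructed from `G` -/

/-- A (stutter-suppressed) history of the partial-observation game `H`:
an initial state in `L × L` and a list of steps, in reverse order. -/
abbrev HPref (L Ai Ao : Type) : Type := (L × L) × List (Ai × Ao × (L × L))

def hLast : HPref L Ai Ao → L × L
  | (s0, []) => s0
  | (_, t :: _) => t.2.2

/-- First-component (actual) `G`-prefix of an `H`-history. -/
def g1 (ρH : HPref L Ai Ao) : Pref L Ai Ao :=
  (ρH.1.1, ρH.2.map fun t => (t.1, t.2.1, t.2.2.1))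

/-- Second-component (observed) `G`-prefix of an `H`-history. -/
def g2 (ρH : HPref L Ai Ao) : Pref L Ai Ao :=
  (ρH.1.2, ρH.2.map fun t => (t.1, t.2.1, t.2.2.2))

/-- Pairing of two action-matching `G`-prefixes into an `H`-history. -/
def h12 (ρ1 ρ2 : Pref L Ai Ao) : HPref L Ai Ao :=
  ((ρ1.1, ρ2.1), List.zipWith (fun t u => (t.1, t.2.1, (t.2.2, u.2.2))) ρ1.2 ρ2.2)

/-- A randomized Player-1 strategy in `H`. -/
structure HStrat1 (L Ai Ao : Type) [Fintype Ai] : Type where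
  toFun : HPref L Ai Ao → Ai → ℝ
  nonneg : ∀ ρ σi, 0 ≤ toFun ρ σi
  sum_one : ∀ ρ, ∑ σi, toFun ρ σi = 1

/-- A randomized Player-2 strategy in `H`. -/
structure HStrat2 (L Ai Ao : Type) [Fintype Ao] : Type where
  toFun : HPref L Ai Ao → Ai → Ao → ℝ
  nonneg : ∀ ρ σi σo, 0 ≤ toFun ρ σi σo
  sum_one : ∀ ρ σi, ∑ σo, toFun ρ σi σo = 1

/-- Player-1 observation-based: depends only on the second components and the
actions of the history. -/
def ObsBased1 (α : HPref L Ai Ao → Ai → ℝ) : Prop :=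
  ∀ ρH ρH' : HPref L Ai Ao, g2 ρH = g2 ρH' → α ρH = α ρH'

/-- Player-2 observation-based: depends only on the first components and the
actions of the history. -/
def ObsBased2 (β : HPref L Ai Ao → Ai → Ao → ℝ) : Prop :=
  ∀ ρH ρH' : HPref L Ai Ao, g1 ρH = g1 ρH' → β ρH = β ρH'

section HGame
variable [Fintype L] [Fintype Ai] [Fintype Ao]

/-- The initial distribution `μ` of `H` for the initial location `ℓ0` of `G`. -/
noncomputable def initDist (G : PUGame L Ai Ao) (ℓ0 : L) : L × L → ℝ :=
  fun s => if s.1 = ℓ0 then G.un ℓ0 s.2 else 0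

noncomputable def conePrHAux (G : PUGame L Ai Ao) (μ : L × L → ℝ)
    (α : HPref L Ai Ao → Ai → ℝ) (β : HPref L Ai Ao → Ai → Ao → ℝ)
    (s0 : L × L) : List (Ai × Ao × (L × L)) → ℝ
  | [] => μ s0
  | t :: rest =>
      conePrHAux G μ α β s0 rest * α (s0, rest) t.1 * β (s0, rest) t.1 t.2.1 *
        G.Δ (hLast ((s0, rest) : HPref L Ai Ao)).1 t.1 t.2.1 t.2.2.1 *
        G.un t.2.2.1 t.2.2.2

/-- Cone probability `Pr^{α,β}_μ(Cone(ρH))` in the game `H` constructed from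
`G`, with initial distribution `μ`. -/
noncomputable def conePrH (G : PUGame L Ai Ao) (μ : L × L → ℝ)
    (α : HPref L Ai Ao → Ai → ℝ) (β : HPref L Ai Ao → Ai → Ao → ℝ)
    (ρH : HPref L Ai Ao) : ℝ :=
  conePrHAux G μ α β ρH.1 ρH.2

end HGame

/- ### Mapping of strategies between `G` and `H` -/

/-- `ĝ` on Player-1 strategies. -/
def ghat1 (α : Pref L Ai Ao → Ai → ℝ) : HPref L Ai Ao → Ai → ℝ :=
  fun ρH => α (g2 ρH)

/-- `ĝ` on Player-2 strategies. -/
def ghat2 (β : Pref L Ai Ao → Ai → Ao → ℝ) : HPref L Ai Ao → Ai → Ao → ℝ :=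
  fun ρH => β (g1 ρH)

/-- `ĝ` on all-powerful Player-2 strategies. -/
def ghatA (β : Pref L Ai Ao → Pref L Ai Ao → Ai → Ao → ℝ) :
    HPref L Ai Ao → Ai → Ao → ℝ :=
  fun ρH => β (g1 ρH) (g2 ρH)

/-- `ĥ` on Player-1 strategies (using the canonical history `h12 ρ ρ` with
`g2 (h12 ρ ρ) = ρ`; well defined for observation-based strategies). -/
def hhat1 (α : HPref L Ai Ao → Ai → ℝ) : Pref L Ai Ao → Ai → ℝ :=
  fun ρ => α (h12 ρ ρ)

/-- `ĥ` on Player-2 strategies. -/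
def hhat2 (β : HPref L Ai Ao → Ai → Ao → ℝ) : Pref L Ai Ao → Ai → Ao → ℝ :=
  fun ρ => β (h12 ρ ρ)

/-- `ĥ` on complete-observation Player-2 strategies, giving an all-powerful
strategy in `G`. -/
def hhatA (β : HPref L Ai Ao → Ai → Ao → ℝ) :
    Pref L Ai Ao → Pref L Ai Ao → Ai → Ao → ℝ :=
  fun ρ1 ρ2 => β (h12 ρ1 ρ2)

/- ### Infinite plays, parity objectives, sure winning -/

/-- The sequence of locations of an infinite play of `G` starting at `ℓ0` with
step sequence `s`. -/
def gLoc (ℓ0 : L) (s : ℕ → Ai × Ao × L) : ℕ → L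
  | 0 => ℓ0
  | j + 1 => (s j).2.2

/-- The actual prefix of a play of `G` up to time `j`. -/
def gTake (ℓ0 : L) (s : ℕ → Ai × Ao × L) (j : ℕ) : Pref L Ai Ao :=
  (ℓ0, (List.ofFn fun i : Fin j => s i).reverse)

/-- The observed prefix of a play of `G` up to time `j`, for observed
locations `obsv`. -/
def gObsTake (obsv : ℕ → L) (s : ℕ → Ai × Ao × L) (j : ℕ) : Pref L Ai Ao :=
  (obsv 0, (List.ofFn fun i : Fin j => ((s i).1, (s i).2.1, obsv ((i : ℕ) + 1))).reverse)

/-- The parity objective: the minimum priority occurring infinitely often is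
even. -/
def ParityHolds (p : L → ℕ) (loc : ℕ → L) : Prop :=
  Even (sInf {k | ∃ᶠ i in Filter.atTop, p (loc i) = k})

section Outcome
variable [Fintype L] [Fintype Ai] [Fintype Ao]

/-- Membership of a play in `Outcome(G, ℓ0, α, β)` for a Player-2 strategy
observing the actual history. -/
def InOutcome (G : PUGame L Ai Ao) (ℓ0 : L) (α : Pref L Ai Ao → Ai → ℝ)
    (β : Pref L Ai Ao → Ai → Ao → ℝ) (s : ℕ → Ai × Ao × L) : Prop :=
  ∃ obsv : ℕ → L,
    (∀ j, 0 < G.un (gLoc ℓ0 s j) (obsv j)) ∧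
    (∀ j, 0 < α (gObsTake obsv s j) (s j).1) ∧
    (∀ j, 0 < β (gTake ℓ0 s j) (s j).1 (s j).2.1) ∧
    (∀ j, 0 < G.Δ (gLoc ℓ0 s j) (s j).1 (s j).2.1 (gLoc ℓ0 s (j + 1)))

/-- Membership of a play in `Outcome(G, ℓ0, α, β^A)` for an all-powerful
Player-2 strategy. -/
def InOutcomeA (G : PUGame L Ai Ao) (ℓ0 : L) (α : Pref L Ai Ao → Ai → ℝ)
    (β : Pref L Ai Ao → Pref L Ai Ao → Ai → Ao → ℝ) (s : ℕ → Ai × Ao × L) : Prop :=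
  ∃ obsv : ℕ → L,
    (∀ j, 0 < G.un (gLoc ℓ0 s j) (obsv j)) ∧
    (∀ j, 0 < α (gObsTake obsv s j) (s j).1) ∧
    (∀ j, 0 < β (gTake ℓ0 s j) (gObsTake obsv s j) (s j).1 (s j).2.1) ∧
    (∀ j, 0 < G.Δ (gLoc ℓ0 s j) (s j).1 (s j).2.1 (gLoc ℓ0 s (j + 1)))

end Outcome

/-- An infinite play of `H`: at each time `j`, the state `(x j).1 : L × L` and
the pair of actions `(x j).2` chosen at that state. -/
abbrev HPlay (L Ai Ao : Type) : Type := ℕ → (L × L) × Ai × Ao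

/-- The `j`-th step of an `H`-play. -/
def hPlayStep (x : HPlay L Ai Ao) (j : ℕ) : Ai × Ao × (L × L) :=
  ((x j).2.1, (x j).2.2, (x (j + 1)).1)

/-- The history of an `H`-play up to time `j`. -/
def hTakePlay (x : HPlay L Ai Ao) (j : ℕ) : HPref L Ai Ao :=
  ((x 0).1, (List.ofFn fun i : Fin j => hPlayStep x i).reverse)

section HOutcome
variable [Fintype L] [Fintype Ai] [Fintype Ao]

/-- An `H`-play is consistent with the strategies `α, β` from initial state
`s0` (all choices and transitions have positive probability). -/
def HConsistent (G : PUGame L Ai Ao) (s0 : L × L)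
    (α : HPref L Ai Ao → Ai → ℝ) (β : HPref L Ai Ao → Ai → Ao → ℝ)
    (x : HPlay L Ai Ao) : Prop :=
  (x 0).1 = s0 ∧
  (∀ j, 0 < α (hTakePlay x j) (x j).2.1) ∧
  (∀ j, 0 < β (hTakePlay x j) (x j).2.1 (x j).2.2) ∧
  (∀ j, 0 < G.Δ (x j).1.1 (x j).2.1 (x j).2.2 (x (j + 1)).1.1 *
          G.un (x (j + 1)).1.1 (x (j + 1)).1.2)

end HOutcome

/- ### Measures on infinite plays -/

/-- The discrete product σ-algebra on infinite plays. -/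
instance playMS (St : Type) : MeasurableSpace (ℕ → St) :=
  @MeasurableSpace.pi ℕ (fun _ => St) (fun _ => ⊤)

/-- The cylinder (cone) of a finite list of steps (in reverse chronological
order): plays whose first steps are exactly the given ones. -/
def listCylinder {St : Type} (l : List St) : Set (ℕ → St) :=
  {s | (List.ofFn fun i : Fin l.length => s i) = l.reverse}

/-- The cylinder (cone) of an `H`-history. -/
def hCylinder (ρH : HPref L Ai Ao) : Set (HPlay L Ai Ao) :=
  {x | (x 0).1 = ρH.1 ∧ (List.ofFn fun i : Fin ρH.2.length => hPlayStep x i) = ρH.2.reverse}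

/-- The map sending an `H`-play to the `G`-play of first components with the
same actions. -/
def proj1Play (x : HPlay L Ai Ao) : ℕ → Ai × Ao × L :=
  fun j => ((x j).2.1, (x j).2.2, (x (j + 1)).1.1)

section MeasCones
variable [Fintype L] [Fintype Ai] [Fintype Ao]

/-- `ν` extends the cone probabilities `Pr^{α,β}_{ℓ0}` of `G`. -/
def GCones (G : PUGame L Ai Ao) (ℓ0 : L) (α : Pref L Ai Ao → Ai → ℝ)
    (β : Pref L Ai Ao → Ai → Ao → ℝ) (ν : Measure (ℕ → Ai × Ao × L)) : Prop :=
  ∀ l : List (Ai × Ao × L),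
    ν (listCylinder l) = ENNReal.ofReal (conePr G α β (ℓ0, l))

/-- `ν` extends the cone probabilities `Pr^{α,β^A}_{ℓ0}` of `G` (all-powerful
Player 2). -/
def GConesA (G : PUGame L Ai Ao) (ℓ0 : L) (α : Pref L Ai Ao → Ai → ℝ)
    (β : Pref L Ai Ao → Pref L Ai Ao → Ai → Ao → ℝ)
    (ν : Measure (ℕ → Ai × Ao × L)) : Prop :=
  ∀ l : List (Ai × Ao × L),
    ν (listCylinder l) = ENNReal.ofReal (conePrA G α β (ℓ0, l))

/-- `ν` extends the cone probabilities `Pr^{α,β}_μ` of `H`. -/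
def HCones (G : PUGame L Ai Ao) (μ : L × L → ℝ) (α : HPref L Ai Ao → Ai → ℝ)
    (β : HPref L Ai Ao → Ai → Ao → ℝ) (ν : Measure (HPlay L Ai Ao)) : Prop :=
  ∀ ρH : HPref L Ai Ao,
    ν (hCylinder ρH) = ENNReal.ofReal (conePrH G μ α β ρH)

end MeasCones

/-!
A play of `H` is a play of `G` together with a sequence of observed locations, so that a play lies
in an outcome set of `G` exactly when some choice of observations turns it into a consistent play
of `H`. An observation-based strategy of `H` looks at only one of the two component prefixes, and is
therefore the image under `ĝ` of a strategy of `G`; its preimage `ĥ` reads it off on the diagonal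
histories, in which both components agree. Thus the two games have the same strategies and the same
plays, and Player 1 surely wins the same objectives in both of them.
-/

theorem g1_h12 {ρ₁ ρ₂ : Pref L Ai Ao} (hlen : ρ₁.2.length ≤ ρ₂.2.length) :
    g1 (h12 ρ₁ ρ₂) = ρ₁ := by
  refine Prod.ext rfl ?_
  simp only [g1, h12, List.map_zipWith]
  exact List.ext_getElem (by simpa using hlen) (by simp)

theorem g2_h12 {ρ₁ ρ₂ : Pref L Ai Ao} (hacts : acts ρ₁ = acts ρ₂) : g2 (h12 ρ₁ ρ₂) = ρ₂ := by
  refine Prod.ext rfl ?_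
  have hlen : ρ₁.2.length = ρ₂.2.length := by
    simpa only [acts, List.length_map] using congrArg List.length hacts
  simp only [g2, h12, List.map_zipWith]
  refine List.ext_getElem (by simp [hlen]) fun i hi₁ hi₂ => ?_
  have hact : (ρ₁.2[i].1, ρ₁.2[i].2.1) = (ρ₂.2[i].1, ρ₂.2[i].2.1) := by
    simpa only [acts, List.getElem_map] using List.getElem_of_eq hacts (by simpa [acts, hlen])
  obtain ⟨hin, hout⟩ := Prod.mk.inj hact
  simp only [List.getElem_zipWith, hin, hout]

theorem ghat1_hhat1 {α : HPref L Ai Ao → Ai → ℝ} (hα : ObsBased1 α) : ghat1 (hhat1 α) = α :=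
  funext fun _ => hα _ _ (g2_h12 rfl)

theorem ghat2_hhat2 {β : HPref L Ai Ao → Ai → Ao → ℝ} (hβ : ObsBased2 β) :
    ghat2 (hhat2 β) = β :=
  funext fun _ => hβ _ _ (g1_h12 le_rfl)

theorem obsBased1_ghat1 (α : Pref L Ai Ao → Ai → ℝ) : ObsBased1 (ghat1 α) :=
  fun _ _ hobs => congrArg α hobs

theorem obsBased2_ghat2 (β : Pref L Ai Ao → Ai → Ao → ℝ) : ObsBased2 (ghat2 β) :=
  fun _ _ hobs => congrArg β hobs

/-- The map `ĝ` on Player-1 strategies, with values in the bundled strategies of `H`. -/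
def Strat1.toHStrat1 [Fintype Ai] (α : Strat1 L Ai Ao) : HStrat1 L Ai Ao where
  toFun := ghat1 α.toFun
  nonneg _ := α.nonneg _
  sum_one _ := α.sum_one _

/-- The map `ĝ` on Player-2 strategies, with values in the bundled strategies of `H`. -/
def Strat2.toHStrat2 [Fintype Ao] (β : Strat2 L Ai Ao) : HStrat2 L Ai Ao where
  toFun := ghat2 β.toFun
  nonneg _ := β.nonneg _
  sum_one _ := β.sum_one _

/-- The map `ĥ` on Player-1 strategies, with values in the bundled strategies of `G`. It inverts
`ĝ` only on observation-based strategies. -/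
def HStrat1.toStrat1 [Fintype Ai] (α : HStrat1 L Ai Ao) : Strat1 L Ai Ao where
  toFun := hhat1 α.toFun
  nonneg _ := α.nonneg _
  sum_one _ := α.sum_one _

/-- The map `ĥ` on Player-2 strategies, with values in the bundled strategies of `G`. It inverts
`ĝ` only on observation-based strategies. -/
def HStrat2.toStrat2 [Fintype Ao] (β : HStrat2 L Ai Ao) : Strat2 L Ai Ao where
  toFun := hhat2 β.toFun
  nonneg _ := β.nonneg _
  sum_one _ := β.sum_one _

/-- The play of `H` that pairs the play of `G` from `ℓ0` with steps `s` with the observed locations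
`obsv`. -/
def pairPlay (ℓ0 : L) (s : ℕ → Ai × Ao × L) (obsv : ℕ → L) : HPlay L Ai Ao :=
  fun j => ((gLoc ℓ0 s j, obsv j), (s j).1, (s j).2.1)

theorem gLoc_proj1Play (x : HPlay L Ai Ao) :
    gLoc (x 0).1.1 (proj1Play x) = fun j => (x j).1.1 := by
  funext j
  cases j <;> rfl

theorem g1_hTakePlay (x : HPlay L Ai Ao) (j : ℕ) :
    g1 (hTakePlay x j) = gTake (x 0).1.1 (proj1Play x) j := by
  simp only [g1, hTakePlay, gTake, List.map_reverse, List.map_ofFn]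
  rfl

theorem g2_hTakePlay (x : HPlay L Ai Ao) (j : ℕ) :
    g2 (hTakePlay x j) = gObsTake (fun i => (x i).1.2) (proj1Play x) j := by
  simp only [g2, hTakePlay, gObsTake, List.map_reverse, List.map_ofFn]
  rfl

section Correspondence
variable [Fintype L] [Fintype Ai] [Fintype Ao] {G : PUGame L Ai Ao} {ℓ0 ℓ : L}
  {α : Pref L Ai Ao → Ai → ℝ} {β : Pref L Ai Ao → Ai → Ao → ℝ}

theorem HConsistent.un_pos {αH : HPref L Ai Ao → Ai → ℝ} {βH : HPref L Ai Ao → Ai → Ao → ℝ}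
    {x : HPlay L Ai Ao} (hx : HConsistent G (ℓ0, ℓ) αH βH x) (hℓ : 0 < G.un ℓ0 ℓ) (j : ℕ) :
    0 < G.un (x j).1.1 (x j).1.2 := by
  obtain ⟨hinit, -, -, htrans⟩ := hx
  cases j with
  | zero => rwa [hinit]
  | succ j => exact pos_of_mul_pos_right (htrans j) (G.Δ_nonneg _ _ _ _)

theorem HConsistent.inOutcome_proj1Play {x : HPlay L Ai Ao}
    (hx : HConsistent G (ℓ0, ℓ) (ghat1 α) (ghat2 β) x) (hℓ : 0 < G.un ℓ0 ℓ) :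
    InOutcome G ℓ0 α β (proj1Play x) := by
  have ⟨hinit, hα, hβ, htrans⟩ := hx
  obtain rfl : (x 0).1.1 = ℓ0 := congrArg Prod.fst hinit
  simp only [InOutcome, gLoc_proj1Play, ← g1_hTakePlay]
  refine ⟨fun j => (x j).1.2, hx.un_pos hℓ, fun j => ?_, hβ,
    fun j => pos_of_mul_pos_left (htrans j) (G.un_nonneg _ _)⟩
  rw [← g2_hTakePlay]
  exact hα j

theorem InOutcome.exists_hConsistent_pairPlay {s : ℕ → Ai × Ao × L}
    (hs : InOutcome G ℓ0 α β s) :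
    ∃ obsv : ℕ → L, 0 < G.un ℓ0 (obsv 0) ∧
      HConsistent G (ℓ0, obsv 0) (ghat1 α) (ghat2 β) (pairPlay ℓ0 s obsv) := by
  obtain ⟨obsv, hun, hα, hβ, hΔ⟩ := hs
  refine ⟨obsv, hun 0, rfl, fun j => ?_, fun j => ?_, fun j => mul_pos (hΔ j) (hun (j + 1))⟩
  · rw [ghat1, g2_hTakePlay]
    exact hα j
  · rw [ghat2, g1_hTakePlay]
    exact hβ j

theorem sure_winning_iff_ghat1 (G : PUGame L Ai Ao) (α : Pref L Ai Ao → Ai → ℝ)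
    (φ : Set (ℕ → L)) (ℓ0 : L) :
    (∀ β : Strat2 L Ai Ao, ∀ s : ℕ → Ai × Ao × L,
        InOutcome G ℓ0 α β.toFun s → gLoc ℓ0 s ∈ φ) ↔
      ∀ ℓ : L, 0 < G.un ℓ0 ℓ →
        ∀ βH : HStrat2 L Ai Ao, ObsBased2 βH.toFun → ∀ x : HPlay L Ai Ao,
          HConsistent G (ℓ0, ℓ) (ghat1 α) βH.toFun x → (fun i => (x i).1.1) ∈ φ := by
  constructor
  · intro hwin ℓ hℓ βH hβH x hx
    obtain rfl : (x 0).1.1 = ℓ0 := congrArg Prod.fst hx.1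
    rw [← ghat2_hhat2 hβH] at hx
    rw [← gLoc_proj1Play]
    exact hwin βH.toStrat2 (proj1Play x) (hx.inOutcome_proj1Play hℓ)
  · intro hwin β s hs
    obtain ⟨obsv, hobs, hx⟩ := hs.exists_hConsistent_pairPlay
    exact hwin (obsv 0) hobs β.toHStrat2 (obsBased2_ghat2 β.toFun) (pairPlay ℓ0 s obsv) hx

end Correspondence

theorem sure_winning_equiv_general [Fintype L] [Fintype Ai] [Fintype Ao]
    (G : PUGame L Ai Ao) (φ : Set (ℕ → L)) (ℓ0 : L) :
    (∃ α : Strat1 L Ai Ao, ∀ β : Strat2 L Ai Ao, ∀ s : ℕ → Ai × Ao × L,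
        InOutcome G ℓ0 α.toFun β.toFun s → gLoc ℓ0 s ∈ φ) ↔
    (∃ αH : HStrat1 L Ai Ao, ObsBased1 αH.toFun ∧
        ∀ ℓ : L, 0 < G.un ℓ0 ℓ →
          ∀ βH : HStrat2 L Ai Ao, ObsBased2 βH.toFun → ∀ x : HPlay L Ai Ao,
            HConsistent G (ℓ0, ℓ) αH.toFun βH.toFun x →
            (fun i => (x i).1.1) ∈ φ) := by
  constructor
  · rintro ⟨α, hwin⟩
    exact ⟨α.toHStrat1, obsBased1_ghat1 α.toFun, (sure_winning_iff_ghat1 G α.toFun φ ℓ0).1 hwin⟩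
  · rintro ⟨αH, hαH, hwin⟩
    rw [← ghat1_hhat1 hαH] at hwin
    exact ⟨αH.toStrat1, (sure_winning_iff_ghat1 G (hhat1 αH.toFun) φ ℓ0).2 hwin⟩

/-- Player 1 has a sure winning strategy from `ℓ0` in `G` for
`Parity(p_G)` against all (not all-powerful) Player-2 strategies iff Player 1
has an observation-based strategy in `H` that is sure winning for
`Parity(p_H)` from every state `(ℓ0, ℓ)` with `un(ℓ0)(ℓ) > 0` against all
observation-based Player-2 strategies. -/
theorem sure_winning_equiv {L Ai Ao : Type}
    [Fintype L] [Fintype Ai] [Fintype Ao]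
    (G : PUGame L Ai Ao) (pG : L → ℕ) (d : ℕ) (hd : ∀ ℓ, pG ℓ ≤ d) (ℓ0 : L) :
    (∃ α : Strat1 L Ai Ao, ∀ β : Strat2 L Ai Ao, ∀ s : ℕ → Ai × Ao × L,
        InOutcome G ℓ0 α.toFun β.toFun s → ParityHolds pG (gLoc ℓ0 s)) ↔
    (∃ αH : HStrat1 L Ai Ao, ObsBased1 αH.toFun ∧
        ∀ ℓ : L, 0 < G.un ℓ0 ℓ →
          ∀ βH : HStrat2 L Ai Ao, ObsBased2 βH.toFun → ∀ x : HPlay L Ai Ao,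
            HConsistent G (ℓ0, ℓ) αH.toFun βH.toFun x →
            ParityHolds pG fun i => (x i).1.1) :=
  sure_winning_equiv_general G {loc | ParityHolds pG loc} ℓ0
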